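/- arXiv:1010.1380 — 4 statements merged into one kernel-verified Lean document; each statement's English description precedes it below -/
import Mathlib

section
/- Existence and uniqueness of the inradius: let n ≥ 3 and β : Fin n → ℝ with 0 < β i < π for all i and ∑ i, (π − β i) > 2π. Then there exists a unique r > 0 such that ∑ i, 2·Real.arcsin(cos(β i / 2) / cosh r) = 2π. -/
open Real

/-- Existence and uniqueness of the inradius of the convex hyperbolic polygon with
an inscribed circle and given angles: there is a unique `r > 0` with
`∑ i, 2 * arcsin (cos (β i / 2) / cosh r) = 2π`. -/
theorem inradius_exists_unique (n : ℕ) (hn : 3 ≤ n) (β : Fin n → ℝ)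
    (hβ : ∀ i, 0 < β i ∧ β i < π)
    (hsum : 2 * π < ∑ i, (π - β i)) :
    ∃! r : ℝ, 0 < r ∧
      ∑ i, 2 * Real.arcsin (Real.cos (β i / 2) / Real.cosh r) = 2 * π := by
  have hpi := Real.pi_pos
  have hn' : (3 : ℝ) ≤ n := by exact_mod_cast hn
  have hc : ∀ i, 0 < Real.cos (β i / 2) := fun i =>
    Real.cos_pos_of_mem_Ioo ⟨by linarith [(hβ i).1], by linarith [(hβ i).2]⟩
  have anti : ∀ r s : ℝ, 0 ≤ r → r < s →
      ∑ i, 2 * Real.arcsin (Real.cos (β i / 2) / Real.cosh s) <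
      ∑ i, 2 * Real.arcsin (Real.cos (β i / 2) / Real.cosh r) := by
    intro r s hr hrs
    have hcosh : Real.cosh r < Real.cosh s :=
      Real.cosh_strictMonoOn hr (hr.trans hrs.le) hrs
    have hlt : ∀ i, Real.cos (β i / 2) / Real.cosh s < Real.cos (β i / 2) / Real.cosh r :=
      fun i => div_lt_div_of_pos_left (hc i) (Real.cosh_pos r) hcosh
    have h0 : ∀ i (t : ℝ), 0 < Real.cos (β i / 2) / Real.cosh t :=
      fun i t => div_pos (hc i) (Real.cosh_pos t)
    have h1 : ∀ i (t : ℝ), Real.cos (β i / 2) / Real.cosh t ≤ 1 := fun i t => by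
      rw [div_le_one (Real.cosh_pos t)]
      exact (Real.cos_le_one _).trans (Real.one_le_cosh t)
    refine Finset.sum_lt_sum_of_nonempty ⟨⟨0, by omega⟩, Finset.mem_univ _⟩ fun i _ => ?_
    have := Real.strictMonoOn_arcsin ⟨by linarith [h0 i s], h1 i s⟩
      ⟨by linarith [h0 i r], h1 i r⟩ (hlt i)
    linarith
  have cont : Continuous fun r : ℝ =>
      ∑ i, 2 * Real.arcsin (Real.cos (β i / 2) / Real.cosh r) := by
    refine continuous_finsetSum _ fun i _ => continuous_const.mul
      (Real.continuous_arcsin.comp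
        (continuous_const.div Real.continuous_cosh fun t => (Real.cosh_pos t).ne'))
  have hzero : ∑ i, 2 * Real.arcsin (Real.cos (β i / 2) / Real.cosh 0) = ∑ i, (π - β i) := by
    refine Finset.sum_congr rfl fun i _ => ?_
    rw [Real.cosh_zero, div_one, ← Real.sin_pi_div_two_sub,
      Real.arcsin_sin (by linarith [(hβ i).2]) (by linarith [(hβ i).1])]
    ring
  have hpn : 0 < π / n := by positivity
  have hpn2 : π / n ≤ π / 2 := div_le_div_of_nonneg_left hpi.le (by norm_num) (by linarith)
  have hsin : 0 < Real.sin (π / n) := Real.sin_pos_of_pos_of_lt_pi hpn (by linarith)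
  have hC : 1 ≤ 1 / Real.sin (π / n) := by
    rw [le_div_iff₀ hsin]; linarith [Real.sin_le_one (π / n)]
  have hR : ∑ i, 2 * Real.arcsin (Real.cos (β i / 2) / Real.cosh (Real.arcosh (1 / Real.sin (π / n))))
      ≤ 2 * π := by
    rw [Real.cosh_arcosh hC]
    calc _ ≤ ∑ i : Fin n, 2 * (π / n) := by
          refine Finset.sum_le_sum fun i _ => ?_
          have h : Real.arcsin (Real.cos (β i / 2) / (1 / Real.sin (π / n))) ≤
              Real.arcsin (Real.sin (π / n)) := by
            apply Real.monotone_arcsin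
            rw [div_div_eq_mul_div, div_one]
            exact mul_le_of_le_one_left hsin.le (Real.cos_le_one _)
          rw [Real.arcsin_sin (by linarith) hpn2] at h
          linarith
      _ = 2 * π := by
          simp
          field_simp
  obtain ⟨r, ⟨hr0, -⟩, hr⟩ := intermediate_value_Icc' (Real.arcosh_nonneg hC) cont.continuousOn
    ⟨hR, (hsum.trans_eq hzero.symm).le⟩
  simp only at hr
  have hrpos : 0 < r := by
    rcases hr0.lt_or_eq with h | h
    · exact h
    · rw [← h, hzero] at hr
      linarith
  refine ⟨r, ⟨hrpos, hr⟩, ?_⟩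
  rintro s ⟨hs, hs'⟩
  rcases lt_trichotomy s r with h | h | h
  · linarith [anti s r hs.le h]
  · exact h
  · linarith [anti r s hrpos.le h]
end

section
/- Geodesics of the hyperbolic plane correspond bijectively to pairs of antipodal points of the de Sitter sphere: let e ∈ ℝ³ with η(e,e) = 1 and L_e = {x ∈ H² : η(x,e) = 0}. Then (a) there exist p, u ∈ ℝ³ with η(p,p) = −1, p 0 > 0, η(u,u) = 1, η(p,u) = 0, η(p,e) = 0, η(u,e) = 0, such that L_e = {(cosh t) • p + (sinh t) • u : t ∈ ℝ}; and (b) for any f ∈ ℝ³ with η(f,f) = 1, L_f = L_e if and only if f = e or f = −e. -/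
open Real

noncomputable section

/-- The Minkowski bilinear form on `ℝ³`. -/
def eta (x y : Fin 3 → ℝ) : ℝ := -(x 0 * y 0) + x 1 * y 1 + x 2 * y 2

/-- The hyperbolic plane in the hyperboloid model. -/
def H2 : Set (Fin 3 → ℝ) := {x | eta x x = -1 ∧ 0 < x 0}

/-- The geodesic of `H²` with polar `e`. -/
def geodesicOf (e : Fin 3 → ℝ) : Set (Fin 3 → ℝ) := {x ∈ H2 | eta x e = 0}

/-- Geodesics of the hyperbolic plane correspond bijectively to pairs of antipodal
points of the de Sitter sphere: the geodesic with unit spacelike polar `e` is a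
complete geodesic parametrized as `cosh t • p + sinh t • u`, and two unit spacelike
vectors define the same geodesic iff they are equal or antipodal. -/
theorem geodesic_polar_bijection (e : Fin 3 → ℝ) (he : eta e e = 1) :
    (∃ p u : Fin 3 → ℝ,
      eta p p = -1 ∧ 0 < p 0 ∧ eta u u = 1 ∧ eta p u = 0 ∧
      eta p e = 0 ∧ eta u e = 0 ∧
      geodesicOf e = {y | ∃ t : ℝ, y = Real.cosh t • p + Real.sinh t • u}) ∧
    (∀ f : Fin 3 → ℝ, eta f f = 1 →
      (geodesicOf f = geodesicOf e ↔ f = e ∨ f = -e)) := by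
  obtain ⟨r, hr, hr2, hr3⟩ : ∃ r : ℝ, 0 < r ∧ r ^ 2 = 1 + e 0 ^ 2 ∧
      r ^ 2 = e 1 ^ 2 + e 2 ^ 2 := by
    have h : Real.sqrt (1 + e 0 ^ 2) ^ 2 = 1 + e 0 ^ 2 := Real.sq_sqrt (by positivity)
    refine ⟨Real.sqrt (1 + e 0 ^ 2), Real.sqrt_pos.mpr (by positivity), h, ?_⟩
    rw [h]
    unfold eta at he
    linarith
  have hr0 : r ≠ 0 := hr.ne'
  obtain ⟨p, hp⟩ : ∃ p : Fin 3 → ℝ, p = ![r, e 0 * e 1 / r, e 0 * e 2 / r] := ⟨_, rfl⟩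
  obtain ⟨u, hu⟩ : ∃ u : Fin 3 → ℝ, u = ![0, -e 2 / r, e 1 / r] := ⟨_, rfl⟩
  have p0 : p 0 = r := by simp [hp]
  have p1 : p 1 = e 0 * e 1 / r := by simp [hp]
  have p2 : p 2 = e 0 * e 2 / r := by simp [hp]
  have u0 : u 0 = 0 := by simp [hu]
  have u1 : u 1 = -e 2 / r := by simp [hu]
  have u2 : u 2 = e 1 / r := by simp [hu]
  have hpp : eta p p = -1 := by
    unfold eta
    rw [p0, p1, p2]
    field_simp
    linear_combination (-r ^ 2) * hr2 - e 0 ^ 2 * hr3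
  have huu : eta u u = 1 := by
    unfold eta
    rw [u0, u1, u2]
    field_simp
    linear_combination -hr3
  have hpu : eta p u = 0 := by
    unfold eta
    rw [p0, p1, p2, u0, u1, u2]
    field_simp
    ring
  have hpe : eta p e = 0 := by
    unfold eta
    rw [p0, p1, p2]
    field_simp
    linear_combination -e 0 * hr3
  have hue : eta u e = 0 := by
    unfold eta
    rw [u0, u1, u2]
    field_simp
    ring
  have hcomb : ∀ t : ℝ, Real.cosh t • p + Real.sinh t • u ∈ geodesicOf e := by
    intro t
    have hc := Real.cosh_sq t
    refine ⟨⟨?_, ?_⟩, ?_⟩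
    · unfold eta at hpp huu hpu ⊢
      simp only [Pi.add_apply, Pi.smul_apply, smul_eq_mul]
      linear_combination (Real.cosh t) ^ 2 * hpp + (Real.sinh t) ^ 2 * huu
        + 2 * Real.cosh t * Real.sinh t * hpu - hc
    · simp only [Pi.add_apply, Pi.smul_apply, smul_eq_mul, p0, u0]
      have := Real.cosh_pos t
      nlinarith [mul_pos this hr]
    · unfold eta at hpe hue ⊢
      simp only [Pi.add_apply, Pi.smul_apply, smul_eq_mul]
      linear_combination (Real.cosh t) * hpe + (Real.sinh t) * hue
  refine ⟨⟨p, u, hpp, p0 ▸ hr, huu, hpu, hpe, hue, ?_⟩, ?_⟩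
  · ext y
    constructor
    · rintro ⟨⟨h1, h2⟩, h3⟩
      unfold eta at h1 h3
      refine ⟨Real.arsinh ((-e 2 * y 1 + e 1 * y 2) / r), ?_⟩
      have hc : Real.cosh (Real.arsinh ((-e 2 * y 1 + e 1 * y 2) / r)) = y 0 / r := by
        rw [Real.cosh_arsinh]
        rw [Real.sqrt_eq_iff_mul_self_eq_of_pos (by positivity)]
        field_simp
        have h4 : e 1 * y 1 + e 2 * y 2 = y 0 * e 0 := by linarith
        have h5 : (-e 2 * y 1 + e 1 * y 2) ^ 2
            = (e 1 ^ 2 + e 2 ^ 2) * (y 1 ^ 2 + y 2 ^ 2) - (y 0 * e 0) ^ 2 := by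
          rw [← h4]; ring
        have h6 : y 1 ^ 2 + y 2 ^ 2 = y 0 ^ 2 - 1 := by linarith
        have h7 : (-e 2 * y 1 + e 1 * y 2) ^ 2
            = r ^ 2 * (y 0 ^ 2 - 1) - (y 0 * e 0) ^ 2 := by
          rw [h5, h6, hr3]
        linear_combination -h7 - y 0 ^ 2 * hr2
      rw [hc, Real.sinh_arsinh]
      funext i
      fin_cases i
      · simp [p0, u0, hr0]
      · simp [p1, u1]
        field_simp
        linear_combination y 1 * hr3 + e 1 * h3
      · simp [p2, u2]
        field_simp
        linear_combination y 2 * hr3 + e 2 * h3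
    · rintro ⟨t, rfl⟩
      exact hcomb t
  · intro f hf
    constructor
    · intro h
      have a0 : eta p f = 0 := by
        have := hcomb 0
        rw [← h] at this
        simpa using this.2
      have a1 : eta u f = 0 := by
        have := hcomb 1
        rw [← h] at this
        have h2 := this.2
        unfold eta at h2 a0 ⊢
        simp only [Pi.add_apply, Pi.smul_apply, smul_eq_mul] at h2
        have hs : Real.sinh 1 ≠ 0 := (Real.sinh_pos_iff.mpr one_pos).ne'
        apply mul_left_cancel₀ hs
        linear_combination h2 - Real.cosh 1 * a0
      unfold eta at a0 a1 hf he
      rw [p0, p1, p2] at a0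
      rw [u0, u1, u2] at a1
      field_simp at a0 a1
      obtain ⟨k, hk⟩ : ∃ k, k = (e 1 * f 1 + e 2 * f 2) / r ^ 2 := ⟨_, rfl⟩
      have f0 : f 0 = k * e 0 := by
        rw [hk]; field_simp; linear_combination -a0
      have f1 : f 1 = k * e 1 := by
        rw [hk]; field_simp; linear_combination f 1 * hr3 - e 2 * a1
      have f2 : f 2 = k * e 2 := by
        rw [hk]; field_simp; linear_combination f 2 * hr3 + e 1 * a1
      have hk2 : k ^ 2 = 1 := by
        rw [f0, f1, f2] at hf
        linear_combination hf - k ^ 2 * he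
      rcases (by simpa using hk2 : k = 1 ∨ k = -1) with h | h
      · left
        funext i
        fin_cases i <;> simp [f0, f1, f2, h]
      · right
        funext i
        fin_cases i <;> simp [f0, f1, f2, h]
    · rintro (rfl | rfl)
      · rfl
      · ext y
        have : eta y (-e) = - eta y e := by
          unfold eta
          simp only [Pi.neg_apply]
          ring
        simp [geodesicOf, this]
end
end

section
/- Derivative of the holonomy map of a polygonal path: fix n ≥ 1 and β : Fin n → ℝ. Define B(t) = ![![cosh t, sinh t, 0], ![sinh t, cosh t, 0], ![0,0,1]], R(θ) = ![![1,0,0], ![0, cos θ, −sin θ], ![0, sin θ, cos θ]], and X = ![![0,1,0], ![1,0,0], ![0,0,0]]. For ℓ : Fin n → ℝ let G(ℓ) = ∏_{i=0}^{n−1} B(ℓ i) · R(π − β i) (ordered matrix product) and, for each i, let Pᵢ(ℓ) = ∏_{j=0}^{i−1} B(ℓ j) · R(π − β j) (ordered product of the first i factors, with P₀ = 1). Then for every ℓ and every i, the partial derivative of G with respect to ℓ i at ℓ equals Pᵢ(ℓ) · X · (Pᵢ(ℓ))⁻¹ · G(ℓ). -/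
open Real Matrix

noncomputable section

attribute [local instance] Matrix.normedAddCommGroup Matrix.normedSpace

/-- Hyperbolic translation of length `t` along a geodesic through the base point. -/
def Bmat (t : ℝ) : Matrix (Fin 3) (Fin 3) ℝ :=
  ![![Real.cosh t, Real.sinh t, 0], ![Real.sinh t, Real.cosh t, 0], ![0, 0, 1]]

/-- Rotation by `θ` about the base point `(1,0,0)` of the hyperboloid. -/
def Rmat (θ : ℝ) : Matrix (Fin 3) (Fin 3) ℝ :=
  ![![1, 0, 0], ![0, Real.cos θ, -Real.sin θ], ![0, Real.sin θ, Real.cos θ]]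

/-- The infinitesimal translation `X = B'(0)`. -/
def Xmat : Matrix (Fin 3) (Fin 3) ℝ := ![![0, 1, 0], ![1, 0, 0], ![0, 0, 0]]

/-- Ordered product of the first `k` factors `B (ℓ j) * R (π - β j)`. -/
def partialProd (n : ℕ) (β : Fin n → ℝ) (ℓ : Fin n → ℝ) : ℕ → Matrix (Fin 3) (Fin 3) ℝ
  | 0 => 1
  | k + 1 => partialProd n β ℓ k *
      (if h : k < n then Bmat (ℓ ⟨k, h⟩) * Rmat (π - β ⟨k, h⟩) else 1)

/-- The holonomy of the polygonal path with edge lengths `ℓ` and angles `β`: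
the ordered product `∏_{i=0}^{n-1} B (ℓ i) * R (π - β i)`. -/
def holonomy (n : ℕ) (β : Fin n → ℝ) (ℓ : Fin n → ℝ) : Matrix (Fin 3) (Fin 3) ℝ :=
  partialProd n β ℓ n

theorem hasDerivAt_mat {F : ℝ → Matrix (Fin 3) (Fin 3) ℝ} {F' : Matrix (Fin 3) (Fin 3) ℝ} {t : ℝ} :
    HasDerivAt F F' t ↔ ∀ a b, HasDerivAt (fun s => F s a b) (F' a b) t := by
  refine (hasDerivAt_pi (φ := F) (φ' := F')).trans ?_
  exact forall_congr' fun a => hasDerivAt_pi (φ := fun s => F s a) (φ' := F' a)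

theorem hasDerivAt_mat_mul_const {F : ℝ → Matrix (Fin 3) (Fin 3) ℝ}
    {F' : Matrix (Fin 3) (Fin 3) ℝ} {t : ℝ} (h : HasDerivAt F F' t)
    (C : Matrix (Fin 3) (Fin 3) ℝ) : HasDerivAt (fun s => F s * C) (F' * C) t := by
  rw [hasDerivAt_mat] at h ⊢
  intro a b
  simp only [Matrix.mul_apply]
  exact HasDerivAt.fun_sum fun j _ => (h a j).mul_const (C j b)

theorem hasDerivAt_mat_const_mul {F : ℝ → Matrix (Fin 3) (Fin 3) ℝ}
    {F' : Matrix (Fin 3) (Fin 3) ℝ} {t : ℝ} (h : HasDerivAt F F' t)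
    (C : Matrix (Fin 3) (Fin 3) ℝ) : HasDerivAt (fun s => C * F s) (C * F') t := by
  rw [hasDerivAt_mat] at h ⊢
  intro a b
  simp only [Matrix.mul_apply]
  exact HasDerivAt.fun_sum fun j _ => (h j b).const_mul (C a j)

theorem hasDerivAt_Bmat (t : ℝ) : HasDerivAt Bmat (Xmat * Bmat t) t := by
  rw [hasDerivAt_mat]
  intro a b
  have hc := Real.hasDerivAt_cosh t
  have hs := Real.hasDerivAt_sinh t
  have h0 := hasDerivAt_const t (0 : ℝ)
  have h1 := hasDerivAt_const t (1 : ℝ)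
  rw [Matrix.mul_apply, Fin.sum_univ_three]
  fin_cases a <;> fin_cases b <;>
    simp [Bmat, Xmat] <;> assumption

theorem isUnit_det_Bmat (t : ℝ) : IsUnit (Bmat t).det := by
  have h : (Bmat t).det = 1 := by
    have := Real.cosh_sq t
    rw [Matrix.det_fin_three]
    simp [Bmat]
    nlinarith
  simp [h]

theorem isUnit_det_Rmat (t : ℝ) : IsUnit (Rmat t).det := by
  have h : (Rmat t).det = 1 := by
    have := Real.sin_sq_add_cos_sq t
    rw [Matrix.det_fin_three]
    simp [Rmat]
    nlinarith
  simp [h]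

theorem isUnit_det_partialProd (n : ℕ) (β ℓ : Fin n → ℝ) (k : ℕ) :
    IsUnit (partialProd n β ℓ k).det := by
  induction k with
  | zero => simp [partialProd]
  | succ k ih =>
    rw [partialProd, Matrix.det_mul]
    refine ih.mul ?_
    split_ifs
    · rw [Matrix.det_mul]
      exact (isUnit_det_Bmat _).mul (isUnit_det_Rmat _)
    · simp

theorem partialProd_update (n : ℕ) (β ℓ : Fin n → ℝ) (i : Fin n) (t : ℝ) (k : ℕ)
    (hk : k ≤ i) : partialProd n β (Function.update ℓ i t) k = partialProd n β ℓ k := by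
  induction k with
  | zero => rfl
  | succ k ih =>
    have hkn : k < n := by omega
    have hne : (⟨k, hkn⟩ : Fin n) ≠ i := by
      intro h
      have := congrArg Fin.val h
      simp at this
      omega
    simp only [partialProd, ih (by omega), Function.update_of_ne hne, hkn, dif_pos]

theorem partialProd_hasDerivAt (n : ℕ) (β ℓ : Fin n → ℝ) (i : Fin n) (k : ℕ)
    (hk : (i : ℕ) + 1 ≤ k) :
    HasDerivAt (fun t : ℝ => partialProd n β (Function.update ℓ i t) k)
      (partialProd n β ℓ i * Xmat * (partialProd n β ℓ i)⁻¹ * partialProd n β ℓ k)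
      (ℓ i) := by
  induction k, hk using Nat.le_induction with
  | base =>
    have hd := hasDerivAt_mat_const_mul (hasDerivAt_mat_mul_const (hasDerivAt_Bmat (ℓ i))
      (Rmat (π - β i))) (partialProd n β ℓ i)
    have e : partialProd n β ℓ i * Xmat * (partialProd n β ℓ i)⁻¹ * partialProd n β ℓ (i + 1)
        = partialProd n β ℓ i * (Xmat * Bmat (ℓ i) * Rmat (π - β i)) := by
      simp only [partialProd, i.2, dif_pos, Fin.eta]
      rw [Matrix.mul_assoc _ _ (_ * _), Matrix.nonsing_inv_mul_cancel_left _ _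
        (isUnit_det_partialProd n β ℓ i)]
      simp only [Matrix.mul_assoc]
    rw [e]
    refine hd.congr_of_eventuallyEq (Filter.Eventually.of_forall fun t => ?_)
    simp only [partialProd, i.2, dif_pos, Fin.eta, partialProd_update n β ℓ i t i le_rfl,
      Function.update_self]
  | succ k hk ih =>
    have hd := hasDerivAt_mat_mul_const ih
      (if h : k < n then Bmat (ℓ ⟨k, h⟩) * Rmat (π - β ⟨k, h⟩) else 1)
    rw [Matrix.mul_assoc] at hd
    refine hd.congr_of_eventuallyEq (Filter.Eventually.of_forall fun t => ?_)
    simp only [partialProd]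
    congr 1
    split_ifs with h
    · have hne : (⟨k, h⟩ : Fin n) ≠ i := by
        intro h
        have := congrArg Fin.val h
        simp at this
        omega
      rw [Function.update_of_ne hne]
    · rfl

/-- Derivative of the holonomy map of a polygonal path: the partial derivative of
`G = holonomy` with respect to `ℓ i` is `Pᵢ * X * Pᵢ⁻¹ * G ℓ`, where `Pᵢ` is the
ordered product of the first `i` factors. -/
theorem holonomy_partial_deriv (n : ℕ) (hn : 1 ≤ n) (β : Fin n → ℝ)
    (ℓ : Fin n → ℝ) (i : Fin n) :
    HasDerivAt (fun t : ℝ => holonomy n β (Function.update ℓ i t))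
      (partialProd n β ℓ i * Xmat * (partialProd n β ℓ i)⁻¹ * holonomy n β ℓ)
      (ℓ i) := by
  exact partialProd_hasDerivAt n β ℓ i n i.2
end
end

section
/- The space of polygons with given angles is a submanifold of codimension three (de Sitter analogue of Schlenker's Theorem A): with B, R, X, G, Pᵢ as in the holonomy setup, let ℓ : Fin n → ℝ satisfy G(ℓ) = 1, and define wᵢ = (Pᵢ(ℓ)).mulVec ![0,0,1] ∈ ℝ³ for each i. Then: (a) the Fréchet derivative D of G at ℓ satisfies ker D = {ℓ̇ : Fin n → ℝ : ∑ i, (ℓ̇ i) • wᵢ = 0}; (b) if w₀, …, w_{n−1} span ℝ³, then D has rank 3, and there is an open neighborhood U of ℓ in ℝⁿ such that G⁻¹({1}) ∩ U is a smooth submanifold of ℝⁿ of dimension n − 3, whose tangent space at ℓ is {ℓ̇ : ∑ i, (ℓ̇ i) • wᵢ = 0}. -/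
open Real Matrix

noncomputable section

attribute [local instance] Matrix.normedAddCommGroup Matrix.normedSpace

open scoped ContDiff Topology

lemma chart_lemma (n : ℕ) (hn : 3 ≤ n) (F : (Fin n → ℝ) → (Fin 3 → ℝ)) (hF : ContDiff ℝ ω F)
    (a : Fin n → ℝ) (F' : (Fin n → ℝ) →L[ℝ] (Fin 3 → ℝ)) (hF' : HasFDerivAt F F' a)
    (hsurj : Function.Surjective F') (h0 : F a = 0) (W : Set (Fin n → ℝ)) (hW : IsOpen W)
    (haW : a ∈ W) :
    ∃ (U : Set (Fin n → ℝ)) (V : Set ((Fin 3 → ℝ) × (Fin (n - 3) → ℝ)))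
        (φ : (Fin n → ℝ) → (Fin 3 → ℝ) × (Fin (n - 3) → ℝ))
        (ψ : (Fin 3 → ℝ) × (Fin (n - 3) → ℝ) → (Fin n → ℝ)),
        IsOpen U ∧ a ∈ U ∧ U ⊆ W ∧ IsOpen V ∧
        ContDiffOn ℝ (⊤ : ℕ∞) φ U ∧ ContDiffOn ℝ (⊤ : ℕ∞) ψ V ∧
        Set.BijOn φ U V ∧ (∀ x ∈ U, ψ (φ x) = x) ∧ (∀ x, (φ x).1 = F x) ∧
        ∀ v, F' v = 0 → ∃ γ : ℝ → Fin n → ℝ, ContDiff ℝ (⊤ : ℕ∞) γ ∧ γ 0 = a ∧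
          (∀ t, γ t ∈ U ∧ F (γ t) = 0) ∧ HasDerivAt γ v 0 := by
  classical
  set K := LinearMap.ker (F' : (Fin n → ℝ) →ₗ[ℝ] (Fin 3 → ℝ)) with hK
  have hrk := LinearMap.finrank_range_add_finrank_ker (F' : (Fin n → ℝ) →ₗ[ℝ] (Fin 3 → ℝ))
  have hr : LinearMap.range (F' : (Fin n → ℝ) →ₗ[ℝ] (Fin 3 → ℝ)) = ⊤ :=
    LinearMap.range_eq_top.2 hsurj
  rw [hr, finrank_top, Module.finrank_fin_fun, Module.finrank_fin_fun] at hrk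
  have hKd : Module.finrank ℝ K = Module.finrank ℝ (Fin (n - 3) → ℝ) := by
    rw [Module.finrank_fin_fun]; change 3 + Module.finrank ℝ K = n at hrk; omega
  let e : K ≃ₗ[ℝ] (Fin (n - 3) → ℝ) := LinearEquiv.ofFinrankEq _ _ hKd
  obtain ⟨q, hq⟩ := LinearMap.exists_leftInverse_of_injective K.subtype K.ker_subtype
  let L : (Fin n → ℝ) →L[ℝ] (Fin (n - 3) → ℝ) := (e.toLinearMap ∘ₗ q).toContinuousLinearMap
  have hL : ∀ x, L x = e (q x) := fun x => rfl
  let A : (Fin n → ℝ) →L[ℝ] (Fin 3 → ℝ) × (Fin (n - 3) → ℝ) := F'.prod L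
  have hAinj : Function.Injective A := by
    rw [injective_iff_map_eq_zero]
    intro x hx
    have h1 : F' x = 0 := congrArg Prod.fst hx
    have h2 : L x = 0 := congrArg Prod.snd hx
    rw [hL, LinearEquiv.map_eq_zero_iff] at h2
    have h3 := LinearMap.congr_fun hq ⟨x, h1⟩
    simp only [LinearMap.comp_apply, Submodule.subtype_apply, LinearMap.id_apply] at h3
    rw [h2] at h3
    exact (congrArg Subtype.val h3).symm
  have hfr : Module.finrank ℝ (Fin n → ℝ) =
      Module.finrank ℝ ((Fin 3 → ℝ) × (Fin (n - 3) → ℝ)) := by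
    rw [Module.finrank_prod, Module.finrank_fin_fun, Module.finrank_fin_fun,
      Module.finrank_fin_fun]; omega
  let E : (Fin n → ℝ) ≃L[ℝ] (Fin 3 → ℝ) × (Fin (n - 3) → ℝ) :=
    (LinearEquiv.ofInjectiveOfFinrankEq (A : (Fin n → ℝ) →ₗ[ℝ] _) hAinj hfr).toContinuousLinearEquiv
  have hEA : (E : (Fin n → ℝ) →L[ℝ] (Fin 3 → ℝ) × (Fin (n - 3) → ℝ)) = A := by
    ext1 x; rfl
  let φ : (Fin n → ℝ) → (Fin 3 → ℝ) × (Fin (n - 3) → ℝ) := fun x => (F x, L (x - a))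
  have hφ : ContDiff ℝ ω φ := hF.prodMk (L.contDiff.comp (contDiff_id.sub contDiff_const))
  have hφA : HasFDerivAt φ A a := by
    refine hF'.prodMk ?_
    have := L.hasFDerivAt.comp a ((hasFDerivAt_id a).sub_const a)
    simpa using this
  have hφ' : HasFDerivAt φ (E : (Fin n → ℝ) →L[ℝ] _) a := by rw [hEA]; exact hφA
  have hω : (ω : WithTop ℕ∞) ≠ 0 := by simp
  have hφa : φ a = 0 := by
    show (F a, L (a - a)) = 0
    rw [h0, sub_self, map_zero]; rfl
  let h := hφ.contDiffAt.toOpenPartialHomeomorph φ hφ' hω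
  have hhφ : ∀ x, h x = φ x := fun x => rfl
  have hahs : a ∈ h.source := hφ.contDiffAt.mem_toOpenPartialHomeomorph_source hφ' hω
  have hψ : ContDiffAt ℝ ω h.symm (φ a) := hφ.contDiffAt.to_localInverse hφ' hω
  have hev := hψ.eventually (by simp)
  obtain ⟨T, hTs, hTo, haT⟩ := eventually_nhds_iff.1 hev
  let U := h.source ∩ φ ⁻¹' T ∩ W
  have hUo : IsOpen U := (h.open_source.inter (hTo.preimage hφ.continuous)).inter hW
  have haU : a ∈ U := ⟨⟨hahs, haT⟩, haW⟩
  have hUs : U ⊆ h.source := fun x hx => hx.1.1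
  have hVo : IsOpen (φ '' U) := h.isOpen_image_of_subset_source hUo hUs
  have hinv : ∀ x ∈ U, h.symm (φ x) = x := fun x hx => h.left_inv (hUs hx)
  have hψV : ∀ y ∈ φ '' U, ContDiffAt ℝ ω h.symm y := by
    rintro y ⟨x, hx, rfl⟩
    exact hTs _ hx.1.2
  refine ⟨U, φ '' U, φ, h.symm, hUo, haU, fun x hx => hx.2, hVo,
    (hφ.of_le le_top).contDiffOn, fun y hy => ((hψV y hy).of_le le_top).contDiffWithinAt,
    ⟨Set.mapsTo_image _ _, fun x hx y hy hxy => ?_, Set.surjOn_image _ _⟩, hinv,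
    fun x => rfl, ?_⟩
  · rw [← hinv x hx, ← hinv y hy, hxy]
  intro v hv
  -- the curve
  have hline : Continuous (fun s : ℝ => ((0 : Fin 3 → ℝ), s • L v)) := by fun_prop
  have h0V : (0 : (Fin 3 → ℝ) × (Fin (n - 3) → ℝ)) ∈ φ '' U := ⟨a, haU, hφa⟩
  have hpre : (fun s : ℝ => ((0 : Fin 3 → ℝ), s • L v)) ⁻¹' (φ '' U) ∈ 𝓝 (0 : ℝ) := by
    apply hline.continuousAt.preimage_mem_nhds
    apply hVo.mem_nhds
    have hz : ((0 : Fin 3 → ℝ), (0 : ℝ) • L v) = 0 := by rw [zero_smul]; rfl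
    rw [hz]; exact h0V
  obtain ⟨δ, hδ, hball⟩ := Metric.mem_nhds_iff.1 hpre
  let c : ℝ := δ / 2
  have hc : 0 < c := by positivity
  let s : ℝ → ℝ := fun t => c * Real.sin (t / c)
  have hs : ∀ t, |s t| < δ := by
    intro t
    have h1 := Real.abs_sin_le_one (t / c)
    have : |s t| = c * |Real.sin (t / c)| := by
      simp only [s, abs_mul, abs_of_pos hc]
    rw [this]
    have : c * |Real.sin (t / c)| ≤ c * 1 := by gcongr
    simp only [c] at *
    linarith
  have hsd : HasDerivAt s 1 0 := by
    have h1 : HasDerivAt (fun t : ℝ => t / c) (1 / c) 0 := (hasDerivAt_id (0 : ℝ)).div_const c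
    have h2 := (h1.sin).const_mul c
    have h3 : c * (Real.cos (0 / c) * (1 / c)) = 1 := by
      rw [zero_div, Real.cos_zero]; field_simp
    rw [h3] at h2
    exact h2
  have hsc : ContDiff ℝ ω s := by
    refine contDiff_const.mul (Real.contDiff_sin.comp (contDiff_id.div_const c))
  let g : ℝ → (Fin 3 → ℝ) × (Fin (n - 3) → ℝ) := fun t => (0, s t • L v)
  have hg : ContDiff ℝ ω g := contDiff_const.prodMk (hsc.smul contDiff_const)
  have hgV : ∀ t, g t ∈ φ '' U := by
    intro t
    apply hball
    rw [mem_ball_zero_iff, Real.norm_eq_abs]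
    exact hs t
  have hg0 : g 0 = φ a := by
    rw [hφa]; simp [g, s]
  have hφγ : ∀ t, h.symm (g t) ∈ U ∧ φ (h.symm (g t)) = g t := by
    intro t
    obtain ⟨x, hx, hxg⟩ := hgV t
    rw [← hxg, hinv x hx]
    exact ⟨hx, rfl⟩
  have hγc : ContDiff ℝ ω (fun t => h.symm (g t)) := by
    rw [contDiff_iff_contDiffAt]
    intro t
    exact (hψV _ (hgV t)).comp t hg.contDiffAt
  have hγ0 : h.symm (g 0) = a := by rw [hg0, hinv a haU]
  refine ⟨fun t => h.symm (g t), hγc.of_le le_top, hγ0,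
    fun t => ⟨(hφγ t).1, congrArg Prod.fst (hφγ t).2⟩, ?_⟩
  have hd := (hγc.differentiable hω 0).hasDerivAt
  have hφγd : HasDerivAt (fun t => φ (h.symm (g t))) (A (deriv (fun t => h.symm (g t)) 0)) 0 := by
    have hφA2 : HasFDerivAt φ A (h.symm (g 0)) := by rw [hγ0]; exact hφA
    exact hφA2.comp_hasDerivAt 0 hd
  have hgd : HasDerivAt g ((0 : Fin 3 → ℝ), (1 : ℝ) • L v) 0 :=
    (hasDerivAt_const 0 _).prodMk (hsd.smul_const _)
  have heq : (fun t => φ (h.symm (g t))) = g := funext fun t => (hφγ t).2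
  rw [heq] at hφγd
  have h1 := hφγd.unique hgd
  have h2 : A v = ((0 : Fin 3 → ℝ), (1 : ℝ) • L v) := by
    show (F' v, L v) = _
    rw [hv, one_smul]
  rw [← h2] at h1
  rw [← hAinj h1]
  exact hd

/-- The Lie algebra isomorphism `ι`. -/
def iotaL : (Fin 3 → ℝ) →ₗ[ℝ] Matrix (Fin 3) (Fin 3) ℝ where
  toFun u := !![0, u 2, -u 1; u 2, 0, -u 0; -u 1, u 0, 0]
  map_add' u v := by
    ext i j; fin_cases i <;> fin_cases j <;> simp <;> ring
  map_smul' c u := by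
    ext i j; fin_cases i <;> fin_cases j <;> simp

/-- The Minkowski form. -/
def Jmat : Matrix (Fin 3) (Fin 3) ℝ := !![-1, 0, 0; 0, 1, 0; 0, 0, 1]

/-- Membership in the isometry group, as used here. -/
def Good (P : Matrix (Fin 3) (Fin 3) ℝ) : Prop :=
  Pᵀ * Jmat * P = Jmat ∧ ∀ u, P * iotaL u = iotaL (P.mulVec u) * P

lemma good_one : Good 1 := by simp [Good]

lemma good_mul {P Q : Matrix (Fin 3) (Fin 3) ℝ} (hP : Good P) (hQ : Good Q) : Good (P * Q) := by
  refine ⟨?_, fun u => ?_⟩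
  · calc (P * Q)ᵀ * Jmat * (P * Q) = Qᵀ * (Pᵀ * Jmat * P) * Q := by
          rw [Matrix.transpose_mul]; simp only [Matrix.mul_assoc]
      _ = Jmat := by rw [hP.1, hQ.1]
  · rw [Matrix.mul_assoc, hQ.2, ← Matrix.mul_assoc, hP.2, Matrix.mul_assoc, Matrix.mulVec_mulVec]

lemma Bmat_eq (t : ℝ) : Bmat t = !![Real.cosh t, Real.sinh t, 0; Real.sinh t, Real.cosh t, 0; 0, 0, 1] := rfl

lemma Rmat_eq (θ : ℝ) : Rmat θ = !![1, 0, 0; 0, Real.cos θ, -Real.sin θ; 0, Real.sin θ, Real.cos θ] := rfl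

lemma good_B (t : ℝ) : Good (Bmat t) := by
  have h := Real.cosh_sq t
  rw [Bmat_eq]
  refine ⟨?_, fun u => ?_⟩
  · ext i j
    fin_cases i <;> fin_cases j <;> simp [Jmat, Matrix.mul_apply, Fin.sum_univ_three] <;> grind
  · ext i j
    fin_cases i <;> fin_cases j <;>
      simp [iotaL, Matrix.mul_apply, Fin.sum_univ_three, Matrix.mulVec, dotProduct] <;> grind

lemma good_R (t : ℝ) : Good (Rmat t) := by
  have h := Real.sin_sq_add_cos_sq t
  rw [Rmat_eq]
  refine ⟨?_, fun u => ?_⟩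
  · ext i j
    fin_cases i <;> fin_cases j <;> simp [Jmat, Matrix.mul_apply, Fin.sum_univ_three] <;> grind
  · ext i j
    fin_cases i <;> fin_cases j <;>
      simp [iotaL, Matrix.mul_apply, Fin.sum_univ_three, Matrix.mulVec, dotProduct] <;> grind

lemma good_partialProd (n : ℕ) (β ℓ : Fin n → ℝ) (k : ℕ) : Good (partialProd n β ℓ k) := by
  induction k with
  | zero => exact good_one
  | succ k ih =>
    rw [partialProd]
    refine good_mul ih ?_
    split_ifs
    · exact good_mul (good_B _) (good_R _)
    · exact good_one

lemma hasDerivAt_matrix_iff {f : ℝ → Matrix (Fin 3) (Fin 3) ℝ} {f' : Matrix (Fin 3) (Fin 3) ℝ}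
    {x : ℝ} : HasDerivAt f f' x ↔ ∀ i j, HasDerivAt (fun t => f t i j) (f' i j) x := by
  constructor
  · intro h i j
    exact hasDerivAt_pi.1 (hasDerivAt_pi.1 h i) j
  · intro h
    exact hasDerivAt_pi.2 fun i => hasDerivAt_pi.2 fun j => h i j

lemma hasDerivAt_matrix_mul {f g : ℝ → Matrix (Fin 3) (Fin 3) ℝ}
    {f' g' : Matrix (Fin 3) (Fin 3) ℝ} {x : ℝ} (hf : HasDerivAt f f' x) (hg : HasDerivAt g g' x) :
    HasDerivAt (fun t => f t * g t) (f' * g x + f x * g') x := by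
  rw [hasDerivAt_matrix_iff] at *
  intro i j
  simp only [Matrix.mul_apply, Matrix.add_apply]
  rw [← Finset.sum_add_distrib]
  exact HasDerivAt.fun_sum fun k _ => (hf i k).mul (hg k j)

lemma iotaL_e : iotaL ![0, 0, 1] = Xmat := by
  ext i j; fin_cases i <;> fin_cases j <;> simp [iotaL, Xmat]

lemma hasDerivAt_B {u : ℝ → ℝ} {u' x : ℝ} (hu : HasDerivAt u u' x) :
    HasDerivAt (fun t => Bmat (u t)) (u' • (Xmat * Bmat (u x))) x := by
  have h1 := hu.cosh
  have h2 := hu.sinh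
  rw [hasDerivAt_matrix_iff]
  have hX : Xmat = !![0, 1, 0; 1, 0, 0; 0, 0, 0] := rfl
  intro i j
  simp only [Bmat_eq, hX]
  fin_cases i <;> fin_cases j <;>
    simp [Matrix.mul_apply, Fin.sum_univ_three, hasDerivAt_const, mul_comm u'] <;> assumption

lemma hasDerivAt_partialProd (n : ℕ) (β ℓ v : Fin n → ℝ) (k : ℕ) (hk : k ≤ n) :
    HasDerivAt (fun t : ℝ => partialProd n β (ℓ + t • v) k)
      (iotaL (∑ i : Fin n, if (i : ℕ) < k then
        v i • (partialProd n β ℓ i).mulVec ![0, 0, 1] else 0) * partialProd n β ℓ k) 0 := by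
  induction k with
  | zero =>
    refine (hasDerivAt_const (0 : ℝ) (1 : Matrix (Fin 3) (Fin 3) ℝ)).congr_deriv ?_
    simp
  | succ k ih =>
    have hkn : k < n := hk
    have ih := ih hkn.le
    simp only [partialProd, hkn, dif_pos]
    have hu : HasDerivAt (fun t : ℝ => (ℓ + t • v) ⟨k, hkn⟩) (v ⟨k, hkn⟩) 0 := by
      have := ((hasDerivAt_id (0 : ℝ)).mul_const (v ⟨k, hkn⟩)).const_add (ℓ ⟨k, hkn⟩)
      simpa using this
    have hR := hasDerivAt_const (0 : ℝ) (Rmat (π - β ⟨k, hkn⟩))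
    have h1 := hasDerivAt_matrix_mul ih (hasDerivAt_matrix_mul (hasDerivAt_B hu) hR)
    refine h1.congr_deriv ?_
    have hsum : (∑ i : Fin n, if (i : ℕ) < k + 1 then
        v i • (partialProd n β ℓ i).mulVec ![0, 0, 1] else 0) =
        (∑ i : Fin n, if (i : ℕ) < k then
          v i • (partialProd n β ℓ i).mulVec ![0, 0, 1] else 0) +
        v ⟨k, hkn⟩ • (partialProd n β ℓ k).mulVec ![0, 0, 1] := by
      have : v ⟨k, hkn⟩ • (partialProd n β ℓ k).mulVec ![0, 0, 1] =
          ∑ i : Fin n, if i = ⟨k, hkn⟩ then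
            v i • (partialProd n β ℓ i).mulVec ![0, 0, 1] else 0 := by
        rw [Finset.sum_ite_eq' Finset.univ]; simp
      rw [this, ← Finset.sum_add_distrib]
      refine Finset.sum_congr rfl fun i _ => ?_
      by_cases h1 : (i : ℕ) < k
      · have : i ≠ ⟨k, hkn⟩ := fun h => by rw [h] at h1; simp at h1
        rw [if_pos (by omega), if_pos h1, if_neg this, add_zero]
      · by_cases h2 : i = ⟨k, hkn⟩
        · subst h2; simp
        · have : (i : ℕ) ≠ k := fun h => h2 (Fin.ext h)
          rw [if_neg (by omega), if_neg h1, if_neg h2, add_zero]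
    rw [hsum, map_add, map_smul]
    have hg := (good_partialProd n β ℓ k).2 ![0, 0, 1]
    rw [iotaL_e] at hg
    simp only [zero_smul, add_zero, mul_zero]
    rw [Matrix.add_mul]
    rw [Matrix.mul_assoc (iotaL _)]
    congr 1
    rw [Matrix.smul_mul, Matrix.smul_mul, ← Matrix.mul_assoc (iotaL _), ← hg]
    simp only [Matrix.mul_smul, Matrix.mul_assoc]

lemma iotaL_inj : Function.Injective iotaL := by
  rw [injective_iff_map_eq_zero]
  intro u hu
  have h0 := congrFun (congrFun hu 2) 1
  have h1 := congrFun (congrFun hu 2) 0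
  have h2 := congrFun (congrFun hu 0) 1
  simp [iotaL] at h0 h1 h2
  ext i; fin_cases i <;> simp [h0, h1, h2]

lemma contDiff_partialProd (n : ℕ) (β : Fin n → ℝ) (k : ℕ) :
    ∀ i j, ContDiff ℝ ω (fun ℓ => partialProd n β ℓ k i j) := by
  induction k with
  | zero => intro i j; exact contDiff_const
  | succ k ih =>
    intro i j
    simp only [partialProd, Matrix.mul_apply]
    refine ContDiff.sum fun m _ => (ih i m).mul ?_
    split_ifs with h
    · simp only [Matrix.mul_apply]
      refine ContDiff.sum fun p _ => ContDiff.mul ?_ contDiff_const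
      have hp : ContDiff ℝ ω (fun ℓ : Fin n → ℝ => ℓ ⟨k, h⟩) := contDiff_apply ℝ ℝ _
      have hc := Real.contDiff_cosh.comp hp
      have hs := Real.contDiff_sinh.comp hp
      simp only [Bmat_eq]
      fin_cases m <;> fin_cases p <;> simp [contDiff_const] <;> assumption
    · exact contDiff_const

/-- Local coordinates on the isometry group near the identity. -/
def coordL : Matrix (Fin 3) (Fin 3) ℝ →ₗ[ℝ] (Fin 3 → ℝ) where
  toFun M := ![M 0 1, M 0 2, M 1 2]
  map_add' M N := by ext i; fin_cases i <;> simp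
  map_smul' c M := by ext i; fin_cases i <;> simp

lemma good_eq_one {M : Matrix (Fin 3) (Fin 3) ℝ} (hM : Good M) (h0 : 0 < M 0 0) (h1 : 0 < M 1 1)
    (h2 : 0 < M 2 2) : M = 1 ↔ coordL M = 0 := by
  constructor
  · rintro rfl; ext i; fin_cases i <;> simp [coordL]
  intro h
  have a1 : M 0 1 = 0 := congrFun h 0
  have a2 : M 0 2 = 0 := congrFun h 1
  have a3 : M 1 2 = 0 := congrFun h 2
  have hJ : ∀ i j, (Mᵀ * Jmat * M) i j = Jmat i j := fun i j => by rw [hM.1]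
  have e22 := hJ 2 2
  have e12 := hJ 1 2
  have e11 := hJ 1 1
  have e01 := hJ 0 1
  have e02 := hJ 0 2
  have e00 := hJ 0 0
  simp [Matrix.mul_apply, Fin.sum_univ_three, Jmat, a1, a2, a3] at e22 e12 e11 e01 e02 e00
  have b1 : M 2 2 = 1 := by nlinarith
  have b2 : M 2 1 = 0 := by simpa [b1] using e12
  have b3 : M 2 0 = 0 := by simpa [b1] using e02
  have b4 : M 1 1 = 1 := by rw [b2] at e11; nlinarith
  have b5 : M 1 0 = 0 := by simpa [b4, b2] using e01
  have b6 : M 0 0 = 1 := by rw [b5, b3] at e00; nlinarith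
  ext i j; fin_cases i <;> fin_cases j <;> simp [*]

/-- The space of polygons with given angles is a smooth submanifold of `ℝⁿ` of
codimension three: at a closed polygonal path (`G ℓ = 1`), the kernel of the
derivative `D` of the holonomy `G` is `{ℓ̇ | ∑ ℓ̇ i • wᵢ = 0}` where the `wᵢ` are the
de Sitter polars of the edges, and if the `wᵢ` span `ℝ³` then `D` has rank `3` and
`G⁻¹(1)` is, near `ℓ`, a smooth submanifold of dimension `n - 3` whose tangent space
at `ℓ` is `{ℓ̇ | ∑ ℓ̇ i • wᵢ = 0}`. -/
theorem polygon_space_submanifold (n : ℕ) (hn : 3 ≤ n) (β : Fin n → ℝ)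
    (ℓ : Fin n → ℝ) (hℓ : holonomy n β ℓ = 1)
    (w : Fin n → Fin 3 → ℝ)
    (hw : ∀ i : Fin n, w i = (partialProd n β ℓ i).mulVec ![0, 0, 1])
    (D : (Fin n → ℝ) →L[ℝ] Matrix (Fin 3) (Fin 3) ℝ)
    (hD : HasFDerivAt (holonomy n β) D ℓ) :
    -- (a) the kernel of the derivative of the holonomy
    (∀ ℓ' : Fin n → ℝ, D ℓ' = 0 ↔ ∑ i, ℓ' i • w i = 0) ∧
    -- (b) if the polars span ℝ³:
    (Submodule.span ℝ (Set.range w) = ⊤ →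
      -- D has rank 3
      Module.finrank ℝ
        (LinearMap.range (D : (Fin n → ℝ) →ₗ[ℝ] Matrix (Fin 3) (Fin 3) ℝ)) = 3 ∧
      -- near ℓ, G⁻¹(1) is a smooth submanifold of dimension n - 3:
      -- there is a smooth chart of ℝⁿ around ℓ flattening it onto a slice
      -- {0} × ℝ^(n-3)
      (∃ (U : Set (Fin n → ℝ)) (V : Set ((Fin 3 → ℝ) × (Fin (n - 3) → ℝ)))
        (φ : (Fin n → ℝ) → (Fin 3 → ℝ) × (Fin (n - 3) → ℝ))
        (ψ : (Fin 3 → ℝ) × (Fin (n - 3) → ℝ) → (Fin n → ℝ)),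
        IsOpen U ∧ ℓ ∈ U ∧ IsOpen V ∧
        ContDiffOn ℝ (⊤ : ℕ∞) φ U ∧ ContDiffOn ℝ (⊤ : ℕ∞) ψ V ∧
        Set.BijOn φ U V ∧ (∀ x ∈ U, ψ (φ x) = x) ∧
        (∀ x ∈ U, (holonomy n β x = 1 ↔ (φ x).1 = 0))) ∧
      -- and its tangent space at ℓ is {ℓ̇ | ∑ ℓ̇ i • wᵢ = 0}
      (∀ ℓ' : Fin n → ℝ, (∑ i, ℓ' i • w i = 0) ↔
        ∃ γ : ℝ → Fin n → ℝ, ContDiff ℝ (⊤ : ℕ∞) γ ∧ γ 0 = ℓ ∧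
          (∀ t, holonomy n β (γ t) = 1) ∧ HasDerivAt γ ℓ' 0)) := by
  have hDv : ∀ v, D v = iotaL (∑ i, v i • w i) := by
    intro v
    have hc : HasDerivAt (fun t : ℝ => ℓ + t • v) v 0 := by
      have := ((hasDerivAt_id (0 : ℝ)).smul_const v).const_add ℓ
      simpa using this
    have hD' : HasFDerivAt (holonomy n β) D (ℓ + (0 : ℝ) • v) := by simpa using hD
    have h1 : HasDerivAt (fun t : ℝ => holonomy n β (ℓ + t • v)) (D v) 0 := by
      have h := HasFDerivAt.comp_hasDerivAt (0 : ℝ) hD' hc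
      exact h
    have h2 := hasDerivAt_partialProd n β ℓ v n le_rfl
    have h3 := h1.unique h2
    rw [h3]
    have h4 : partialProd n β ℓ n = 1 := hℓ
    rw [h4, Matrix.mul_one]
    congr 1
    refine Finset.sum_congr rfl fun i _ => ?_
    rw [if_pos i.2, hw]
  have hker : ∀ v, D v = 0 ↔ ∑ i, v i • w i = 0 := by
    intro v
    rw [hDv, map_eq_zero_iff _ iotaL_inj]
  refine ⟨hker, fun hspan => ?_⟩
  have hsurj : ∀ u : Fin 3 → ℝ, ∃ v : Fin n → ℝ, ∑ i, v i • w i = u := by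
    intro u
    have hu : u ∈ Submodule.span ℝ (Set.range w) := by rw [hspan]; trivial
    exact (Submodule.mem_span_range_iff_exists_fun ℝ).1 hu
  have hrange : LinearMap.range (D : (Fin n → ℝ) →ₗ[ℝ] Matrix (Fin 3) (Fin 3) ℝ) =
      LinearMap.range iotaL := by
    ext M
    constructor
    · rintro ⟨v, rfl⟩
      exact ⟨_, (hDv v).symm⟩
    · rintro ⟨u, rfl⟩
      obtain ⟨v, rfl⟩ := hsurj u
      exact ⟨v, hDv v⟩
  have hrank : Module.finrank ℝ
      (LinearMap.range (D : (Fin n → ℝ) →ₗ[ℝ] Matrix (Fin 3) (Fin 3) ℝ)) = 3 := by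
    rw [hrange, LinearMap.finrank_range_of_inj iotaL_inj, Module.finrank_fin_fun]
  let C : Matrix (Fin 3) (Fin 3) ℝ →L[ℝ] (Fin 3 → ℝ) := LinearMap.toContinuousLinearMap coordL
  have hCc : ∀ M, C M = coordL M := fun M => rfl
  have hent := contDiff_partialProd n β n
  have hF : ContDiff ℝ ω (fun x => C (holonomy n β x)) := by
    rw [contDiff_pi]
    intro i
    fin_cases i
    · exact hent 0 1
    · exact hent 0 2
    · exact hent 1 2
  have hF' : HasFDerivAt (fun x => C (holonomy n β x)) (C.comp D) ℓ :=
    C.hasFDerivAt.comp ℓ hD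
  have hCs : Function.Surjective (C.comp D) := by
    intro y
    obtain ⟨v, hv⟩ := hsurj ![-y 2, -y 1, y 0]
    refine ⟨v, ?_⟩
    rw [ContinuousLinearMap.comp_apply, hDv, hv, hCc]
    ext i; fin_cases i <;> simp [coordL, iotaL]
  let W : Set (Fin n → ℝ) := {x | 0 < partialProd n β x n 0 0} ∩
    {x | 0 < partialProd n β x n 1 1} ∩ {x | 0 < partialProd n β x n 2 2}
  have hW : IsOpen W :=
    ((isOpen_lt continuous_const (hent 0 0).continuous).inter
      (isOpen_lt continuous_const (hent 1 1).continuous)).inter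
      (isOpen_lt continuous_const (hent 2 2).continuous)
  have hℓ1 : partialProd n β ℓ n = 1 := hℓ
  have hℓW : ℓ ∈ W := by simp [W, hℓ1]
  have hWiff : ∀ x ∈ W, (holonomy n β x = 1 ↔ C (holonomy n β x) = 0) := fun x hx =>
    good_eq_one (good_partialProd n β x n) hx.1.1 hx.1.2 hx.2
  obtain ⟨U, V, φ, ψ, hU, hℓU, hUW, hV, hφ, hψ, hbij, hinv, hφF, hcurve⟩ :=
    chart_lemma n hn _ hF ℓ _ hF' hCs ((hWiff ℓ hℓW).1 hℓ) W hW hℓW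
  refine ⟨hrank, ⟨U, V, φ, ψ, hU, hℓU, hV, hφ, hψ, hbij, hinv, fun x hx => ?_⟩, fun v => ⟨?_, ?_⟩⟩
  · rw [hφF]; exact hWiff x (hUW hx)
  · intro hv
    obtain ⟨γ, h1, h2, h3, h4⟩ := hcurve v (by
      rw [ContinuousLinearMap.comp_apply, (hker v).2 hv, map_zero])
    exact ⟨γ, h1, h2, fun t => (hWiff _ (hUW (h3 t).1)).2 (h3 t).2, h4⟩
  · rintro ⟨γ, h1, h2, h3, h4⟩
    rw [← hker]
    have hD' : HasFDerivAt (holonomy n β) D (γ 0) := by rw [h2]; exact hD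
    have h5 : HasDerivAt (fun t => holonomy n β (γ t)) (D v) 0 := hD'.comp_hasDerivAt 0 h4
    simp only [h3] at h5
    exact h5.unique (hasDerivAt_const _ _)
end
end
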